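/- Let C₂ be a Cantor set in ℝ³ contained in the closed unit ball centered at (2,0,0) with (1,0,0) ∈ C₂, and let A be the straight segment from (-1,0,0) to (1,0,0). Let V = {p ∈ ℝ³ : p₀ > -1} \ (C₂ ∪ A). If ℝ³ \ C₂ is simply connected, then V is simply connected. -/

import Mathlib

open Metric Set

noncomputable section

/-- ℝ³ as Euclidean space. -/
abbrev R3 : Type := EuclideanSpace ℝ (Fin 3)

/-- The point (a, b, c) of ℝ³. -/
def pt (a b c : ℝ) : R3 := (WithLp.equiv 2 (Fin 3 → ℝ)).symm ![a, b, c]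

/-- A Cantor set in ℝ³: a nonempty compact perfect totally disconnected subset. -/
def IsCantorSubset (C : Set R3) : Prop :=
  C.Nonempty ∧ IsCompact C ∧ Perfect C ∧ IsTotallyDisconnected C


/-- The straight segment from (-1,0,0) to (1,0,0). -/
def segA : Set R3 := segment ℝ (pt (-1) 0 0) (pt 1 0 0)

/-- A retract of a simply connected space is simply connected. -/
theorem sc_of_retract {X Y : Type*} [TopologicalSpace X] [TopologicalSpace Y]
    [SimplyConnectedSpace X] (r : C(X, Y)) (i : C(Y, X)) (h : ∀ y, r (i y) = y) :
    SimplyConnectedSpace Y := by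
  rw [simply_connected_iff_loops_nullhomotopic]
  have hs : Function.Surjective r := fun y => ⟨i y, h y⟩
  refine ⟨hs.pathConnectedSpace r.continuous, fun x γ => ?_⟩
  obtain ⟨F⟩ := SimplyConnectedSpace.paths_homotopic (γ.map i.continuous) (Path.refl (i x))
  exact ⟨{
    toFun := fun t => r (F t)
    continuous_toFun := by fun_prop
    map_zero_left := by simp [h]
    map_one_left := by simp [h]
    prop' := by
      intro t x hx
      have := F.prop' t x hx
      simp at this
      simp
      rw [this, h] }⟩

@[simp] theorem pt_zero (a b c : ℝ) : pt a b c 0 = a := rfl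
@[simp] theorem pt_one (a b c : ℝ) : pt a b c 1 = b := rfl
@[simp] theorem pt_two (a b c : ℝ) : pt a b c 2 = c := rfl

theorem r3_ext {p q : R3} (h0 : p 0 = q 0) (h1 : p 1 = q 1) (h2 : p 2 = q 2) : p = q := by
  ext i; fin_cases i <;> assumption

theorem continuous_pt {X : Type*} [TopologicalSpace X] {f g h : X → ℝ} (hf : Continuous f)
    (hg : Continuous g) (hh : Continuous h) : Continuous fun x => pt (f x) (g x) (h x) := by
  unfold pt
  refine (PiLp.continuous_toLp 2 _).comp ?_
  refine continuous_pi fun i => ?_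
  fin_cases i <;> simpa

theorem mem_cb {p : R3} (h : p ∈ closedBall (pt 2 0 0) 1) :
    (p 0 - 2) ^ 2 + p 1 ^ 2 + p 2 ^ 2 ≤ 1 := by
  rw [mem_closedBall, EuclideanSpace.dist_eq, Real.sqrt_le_left zero_le_one, one_pow] at h
  simpa [Fin.sum_univ_three, Real.dist_eq, sq_abs] using h

theorem mem_segA {p : R3} : p ∈ segA ↔ (-1 ≤ p 0 ∧ p 0 ≤ 1) ∧ p 1 = 0 ∧ p 2 = 0 := by
  unfold segA
  constructor
  · rintro ⟨a, b, ha, hb, hab, rfl⟩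
    simp
    constructor <;> linarith
  · rintro ⟨⟨h1, h2⟩, h3, h4⟩
    refine ⟨(1 - p 0) / 2, (1 + p 0) / 2, by linarith, by linarith, by ring, ?_⟩
    apply r3_ext <;> simp [h3, h4]
    ring

/-- The gauge of the big ball `B'` (centre (3,0,0), radius 2) seen from (2,0,0). -/
def gg (p : R3) : ℝ :=
  (√((p 0 - 2) ^ 2 + 3 * ((p 0 - 2) ^ 2 + p 1 ^ 2 + p 2 ^ 2)) - (p 0 - 2)) / 3

theorem gg_quad (p : R3) : 3 * gg p ^ 2 + 2 * (p 0 - 2) * gg p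
    = (p 0 - 2) ^ 2 + p 1 ^ 2 + p 2 ^ 2 := by
  have := Real.sq_sqrt (x := (p 0 - 2) ^ 2 + 3 * ((p 0 - 2) ^ 2 + p 1 ^ 2 + p 2 ^ 2))
    (by positivity)
  unfold gg
  nlinarith

theorem gg_lin (p : R3) : 0 ≤ 3 * gg p + 2 * (p 0 - 2) ∧ 0 ≤ gg p := by
  have h : |2 * (p 0 - 2)| ≤ √((p 0 - 2) ^ 2 + 3 * ((p 0 - 2) ^ 2 + p 1 ^ 2 + p 2 ^ 2)) := by
    apply Real.abs_le_sqrt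
    nlinarith [sq_nonneg (p 1), sq_nonneg (p 2)]
  have := abs_le.1 h
  have h0 := Real.sqrt_nonneg ((p 0 - 2) ^ 2 + 3 * ((p 0 - 2) ^ 2 + p 1 ^ 2 + p 2 ^ 2))
  unfold gg
  constructor <;> linarith

theorem continuous_gg : Continuous gg := by
  unfold gg; fun_prop

/-- The radial scaling factor. -/
def lam (p : R3) : ℝ := (max 1 (gg p))⁻¹

theorem continuous_lam : Continuous lam := by
  unfold lam
  exact (continuous_const.max continuous_gg).inv₀ fun p => by positivity

theorem lam_pos (p : R3) : 0 < lam p := by unfold lam; positivity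

theorem lam_le (p : R3) : lam p ≤ 1 := inv_le_one_of_one_le₀ (le_max_left _ _)

theorem lam_eq_one {p : R3} (h : gg p ≤ 1) : lam p = 1 := by simp [lam, h]

/-- The big ball. -/
def BB : Set R3 := {p | (p 0 - 3) ^ 2 + p 1 ^ 2 + p 2 ^ 2 ≤ 4}

theorem gg_le_of_mem {p : R3} (h : p ∈ BB) : gg p ≤ 1 := by
  have h' : (p 0 - 3) ^ 2 + p 1 ^ 2 + p 2 ^ 2 ≤ 4 := h
  have q := gg_quad p
  have l := gg_lin p
  by_contra! hc
  have : 0 < (gg p - 1) * (3 * gg p + 2 * (p 0 - 2) + 3) := by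
    apply mul_pos <;> linarith
  nlinarith

/-- Radial homotheties with centre (2,0,0). -/
def scl (m : ℝ) (p : R3) : R3 := pt (2 + m * (p 0 - 2)) (m * p 1) (m * p 2)

theorem scl_one (p : R3) : scl 1 p = p := by
  apply r3_ext <;> simp [scl]

theorem scl_lam_mem (p : R3) : scl (lam p) p ∈ BB := by
  have q := gg_quad p
  have l := gg_lin p
  have hp := lam_pos p
  set G := max 1 (gg p) with hG
  have h1 : gg p ≤ G := le_max_right _ _
  have h3 : lam p * G = 1 := inv_mul_cancel₀ (by positivity)
  have h2 : 0 ≤ (G - gg p) * (3 * gg p + 2 * (p 0 - 2) + 3 * G) := by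
    apply mul_nonneg
    · linarith
    · have : 1 ≤ G := le_max_left _ _
      linarith
  have h4 : 0 ≤ lam p ^ 2 * ((G - gg p) * (3 * gg p + 2 * (p 0 - 2) + 3 * G)) := by positivity
  have e : lam p ^ 2 * ((G - gg p) * (3 * gg p + 2 * (p 0 - 2) + 3 * G))
      = 3 * (lam p * G) ^ 2 + 2 * (p 0 - 2) * (lam p * G) * lam p
        - lam p ^ 2 * ((p 0 - 2) ^ 2 + p 1 ^ 2 + p 2 ^ 2) := by
    rw [← q]; ring
  rw [e, h3] at h4
  show (2 + lam p * (p 0 - 2) - 3) ^ 2 + (lam p * p 1) ^ 2 + (lam p * p 2) ^ 2 ≤ 4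
  nlinarith

theorem scl_mem_V {C : Set R3} (hB : C ⊆ closedBall (pt 2 0 0) 1) {p : R3}
    (hp : p ∈ {p : R3 | p 0 > -1} \ (C ∪ segA)) {m : ℝ} (hm : lam p ≤ m) (hm1 : m ≤ 1) :
    scl m p ∈ {p : R3 | p 0 > -1} \ (C ∪ segA) := by
  by_cases hg : gg p ≤ 1
  · rw [lam_eq_one hg] at hm
    rw [le_antisymm hm1 hm, scl_one]
    exact hp
  push Not at hg
  have hm0 : 0 < m := (lam_pos p).trans_le hm
  obtain ⟨h0, hn⟩ := hp
  replace h0 : -1 < p 0 := h0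
  have hA : ¬ ((-1 ≤ p 0 ∧ p 0 ≤ 1) ∧ p 1 = 0 ∧ p 2 = 0) :=
    fun h => hn (Or.inr (mem_segA.2 h))
  have key : p 1 = 0 → p 2 = 0 → m * (p 0 - 2) ≤ -1 → False := by
    intro h1 h2 h3
    refine hA ⟨⟨h0.le, ?_⟩, h1, h2⟩
    by_contra! hc
    nlinarith
  refine ⟨?_, ?_⟩
  · show 2 + m * (p 0 - 2) > -1
    nlinarith
  rintro (hC | hS)
  · have hb := mem_cb (hB hC)
    simp only [scl, pt_zero, pt_one, pt_two] at hb
    have q := gg_quad p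
    have l := gg_lin p
    have hmg : 1 ≤ m * gg p := by
      have : lam p * gg p = 1 := by
        unfold lam; rw [max_eq_right hg.le]; exact inv_mul_cancel₀ (by linarith)
      nlinarith
    have h2 : 0 ≤ (m * gg p - 1) * (m * (3 * gg p + 2 * (p 0 - 2)) + 3) := by
      apply mul_nonneg
      · linarith
      · have := mul_nonneg hm0.le l.1
        linarith
    have e : (m * gg p - 1) * (m * (3 * gg p + 2 * (p 0 - 2)) + 3)
      = m ^ 2 * ((p 0 - 2) ^ 2 + p 1 ^ 2 + p 2 ^ 2) - 2 * (m * (p 0 - 2)) - 3 := by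
      rw [← q]; ring
    rw [e] at h2
    have h3 : m * (p 0 - 2) ≤ -1 := by nlinarith
    have h4 : (m * p 1) ^ 2 + (m * p 2) ^ 2 ≤ 0 := by nlinarith
    have h5 : m * p 1 = 0 := by
      apply pow_eq_zero_iff (two_ne_zero) |>.1
      nlinarith [sq_nonneg (m * p 1), sq_nonneg (m * p 2)]
    have h6 : m * p 2 = 0 := by
      apply pow_eq_zero_iff (two_ne_zero) |>.1
      nlinarith [sq_nonneg (m * p 1), sq_nonneg (m * p 2)]
    exact key ((mul_eq_zero.1 h5).resolve_left hm0.ne') ((mul_eq_zero.1 h6).resolve_left hm0.ne') h3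
  · obtain ⟨⟨_, h3⟩, h5, h6⟩ := mem_segA.1 hS
    simp only [scl, pt_zero, pt_one, pt_two] at h3 h5 h6
    exact key ((mul_eq_zero.1 h5).resolve_left hm0.ne') ((mul_eq_zero.1 h6).resolve_left hm0.ne')
      (by linarith)

theorem BB_sub_V {C : Set R3} (hx : pt 1 0 0 ∈ C) {p : R3} (hp : p ∈ BB \ C) :
    p ∈ {p : R3 | p 0 > -1} \ (C ∪ segA) := by
  obtain ⟨hb, hC⟩ := hp
  replace hb : (p 0 - 3) ^ 2 + p 1 ^ 2 + p 2 ^ 2 ≤ 4 := hb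
  have h1 : 1 ≤ p 0 := by nlinarith [sq_nonneg (p 1), sq_nonneg (p 2)]
  refine ⟨by show p 0 > -1; linarith, ?_⟩
  rintro (h | h)
  · exact hC h
  · obtain ⟨⟨_, h3⟩, h5, h6⟩ := mem_segA.1 h
    apply hC
    convert hx
    apply r3_ext <;> simp [h5, h6]
    linarith

/-- `V` deformation retracts onto `BB \ C`. -/
def hequiv (C : Set R3) (hB : C ⊆ closedBall (pt 2 0 0) 1) (hx : pt 1 0 0 ∈ C) :
    ContinuousMap.HomotopyEquiv ↥({p : R3 | p 0 > -1} \ (C ∪ segA)) ↥(BB \ C) where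
  toFun := ⟨fun p => ⟨scl (lam p) p, scl_lam_mem p.1,
      fun h => (scl_mem_V hB p.2 le_rfl (lam_le _)).2 (Or.inl h)⟩, by
    have := continuous_lam
    refine Continuous.subtype_mk ?_ _
    apply continuous_pt <;> fun_prop⟩
  invFun := ⟨fun p => ⟨p.1, BB_sub_V hx p.2⟩, by fun_prop⟩
  left_inv := by
    refine ⟨{
      toFun := fun tp => ⟨scl ((1 - tp.1) * lam tp.2 + tp.1) tp.2, ?_⟩
      continuous_toFun := ?_
      map_zero_left := ?_
      map_one_left := ?_ }⟩
    · have h1 := lam_le tp.2.1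
      have h2 := tp.1.2.1
      have h3 := tp.1.2.2
      apply scl_mem_V hB tp.2.2 <;> nlinarith
    · have := continuous_lam
      refine Continuous.subtype_mk ?_ _
      apply continuous_pt <;> fun_prop
    · intro p
      apply Subtype.ext
      simp
    · intro p
      apply Subtype.ext
      simp [scl_one]
  right_inv := by
    convert ContinuousMap.Homotopic.refl _
    ext1 p
    apply Subtype.ext
    simp [lam_eq_one (gg_le_of_mem p.2.1), scl_one]

/-- squared distance to (1,0,0) -/
def nn (p : R3) : ℝ := (p 0 - 1) ^ 2 + p 1 ^ 2 + p 2 ^ 2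

/-- Inversion in the unit sphere centred at (1,0,0). -/
def inv3 (p : R3) : R3 := pt (1 + (p 0 - 1) / nn p) (p 1 / nn p) (p 2 / nn p)

/-- Projection to the half space. -/
def clampR (p : R3) : R3 := pt (max (p 0) (5 / 4)) (p 1) (p 2)

theorem nn_pos {p : R3} (h : p ≠ pt 1 0 0) : 0 < nn p := by
  unfold nn
  by_contra! hc
  apply h
  have h0 : (p 0 - 1) = 0 := by nlinarith [sq_nonneg (p 0 - 1), sq_nonneg (p 1), sq_nonneg (p 2)]
  have h1 : p 1 = 0 := by nlinarith [sq_nonneg (p 0 - 1), sq_nonneg (p 1), sq_nonneg (p 2)]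
  have h2 : p 2 = 0 := by nlinarith [sq_nonneg (p 0 - 1), sq_nonneg (p 1), sq_nonneg (p 2)]
  apply r3_ext <;> simp [h1, h2]
  linarith

theorem nn_pos' {p : R3} (h : 5 / 4 ≤ p 0) : 0 < nn p := by
  unfold nn; nlinarith [sq_nonneg (p 1), sq_nonneg (p 2)]

theorem clamp_ge (p : R3) : 5 / 4 ≤ clampR p 0 := le_max_right _ _

theorem nn_inv3 {p : R3} (h : 0 < nn p) : nn (inv3 p) = (nn p)⁻¹ := by
  have e : nn (inv3 p) = nn p / nn p ^ 2 := by
    have : nn (inv3 p) = ((p 0 - 1) ^ 2 + p 1 ^ 2 + p 2 ^ 2) / nn p ^ 2 := by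
      show (1 + (p 0 - 1) / nn p - 1) ^ 2 + (p 1 / nn p) ^ 2 + (p 2 / nn p) ^ 2 = _
      ring
    exact this
  rw [e]; field_simp

theorem inv3_inv3 {p : R3} (h : 0 < nn p) : inv3 (inv3 p) = p := by
  have e := nn_inv3 h
  apply r3_ext
  · show 1 + (inv3 p 0 - 1) / nn (inv3 p) = _
    rw [e]; simp only [inv3, pt_zero]; field_simp; ring
  · show inv3 p 1 / nn (inv3 p) = _
    rw [e]; simp only [inv3, pt_one]; field_simp
  · show inv3 p 2 / nn (inv3 p) = _
    rw [e]; simp only [inv3, pt_two]; field_simp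

theorem mem_BB {p : R3} : p ∈ BB ↔ nn p ≤ 4 * (p 0 - 1) := by
  show (p 0 - 3) ^ 2 + p 1 ^ 2 + p 2 ^ 2 ≤ 4 ↔ _
  unfold nn
  constructor <;> intro h <;> linarith

/-- The retraction onto the big ball. -/
def rho (p : R3) : R3 := inv3 (clampR (inv3 p))

theorem rho_mem (p : R3) : rho p ∈ BB := by
  have h := clamp_ge (inv3 p)
  have hn := nn_pos' h
  rw [mem_BB]
  unfold rho
  rw [nn_inv3 hn]
  simp only [inv3, pt_zero] at *
  rw [add_sub_cancel_left, inv_eq_one_div, mul_div_assoc', div_le_div_iff_of_pos_right hn]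
  linarith

theorem rho_eq {p : R3} (h : p ∈ BB) (hp : p ≠ pt 1 0 0) : rho p = p := by
  have hn := nn_pos hp
  rw [mem_BB] at h
  have : clampR (inv3 p) = inv3 p := by
    apply r3_ext
    · show max (inv3 p 0) (5 / 4) = _
      apply max_eq_left
      have : 1 / 4 ≤ (p 0 - 1) / nn p := by rw [le_div_iff₀ hn]; linarith
      show 5 / 4 ≤ 1 + (p 0 - 1) / nn p
      linarith
    · rfl
    · rfl
  unfold rho
  rw [this, inv3_inv3 hn]

theorem rho_nmem {C : Set R3} (hB : C ⊆ closedBall (pt 2 0 0) 1) (hx : pt 1 0 0 ∈ C) {p : R3}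
    (hp : p ∉ C) : rho p ∉ C := by
  have hp1 : p ≠ pt 1 0 0 := fun h => hp (h ▸ hx)
  by_cases h : p ∈ BB
  · rwa [rho_eq h hp1]
  intro hc
  have hn := nn_pos hp1
  have hb := mem_cb (hB hc)
  rw [mem_BB] at h
  push Not at h
  have h0 : clampR (inv3 p) 0 = 5 / 4 := by
    apply max_eq_right
    have : (p 0 - 1) / nn p < 1 / 4 := by rw [div_lt_iff₀ hn]; linarith
    show 1 + (p 0 - 1) / nn p ≤ 5 / 4
    linarith
  have hn' := nn_pos' (clamp_ge (inv3 p))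
  have h1 : nn (rho p) = (nn (clampR (inv3 p)))⁻¹ := nn_inv3 hn'
  have h2 : rho p 0 = 1 + (5 / 4 - 1) / nn (clampR (inv3 p)) := by
    rw [← h0]; rfl
  have h3 : 0 < (nn (clampR (inv3 p)))⁻¹ := by positivity
  rw [div_eq_mul_inv] at h2
  generalize (nn (clampR (inv3 p)))⁻¹ = k at h1 h2 h3
  unfold nn at h1
  nlinarith

theorem rho_cont {C : Set R3} (hx : pt 1 0 0 ∈ C) :
    Continuous fun p : ↥(Cᶜ) => rho p.1 := by
  have hp : ∀ p : ↥(Cᶜ), nn p.1 ≠ 0 := fun p =>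
    (nn_pos (fun h : p.1 = pt 1 0 0 => p.2 (by rw [h]; exact hx))).ne'
  have hp' : ∀ p : R3, nn (clampR p) ≠ 0 := fun p => (nn_pos' (clamp_ge p)).ne'
  have cn : Continuous nn := by unfold nn; fun_prop
  have c1 : Continuous fun p : ↥(Cᶜ) => inv3 p.1 := by
    apply continuous_pt <;> fun_prop (disch := assumption)
  have c2 : Continuous clampR := by
    apply continuous_pt <;> fun_prop
  have c3 : Continuous fun p : R3 => inv3 (clampR p) := by
    apply continuous_pt <;> fun_prop (disch := assumption)
  exact c3.comp c1

theorem sc_BB (C : Set R3) (hB : C ⊆ closedBall (pt 2 0 0) 1) (hx : pt 1 0 0 ∈ C)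
    (hsc : SimplyConnectedSpace ↥(Cᶜ)) : SimplyConnectedSpace ↥(BB \ C) :=
  sc_of_retract (X := ↥(Cᶜ))
    ⟨fun p => ⟨rho p.1, rho_mem _, rho_nmem hB hx p.2⟩, (rho_cont hx).subtype_mk _⟩
    ⟨fun p => ⟨p.1, p.2.2⟩, by fun_prop⟩
    (fun p => Subtype.ext (rho_eq p.2.1 (fun h => p.2.2 (h ▸ hx))))

/-- If ℝ³ \ C₂ is simply connected, then the open half-space {x > -1} minus `C₂ ∪ A`
is simply connected. -/
theorem stmt_14 (C₂ : Set R3) (h₂ : IsCantorSubset C₂)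
    (hB : C₂ ⊆ closedBall (pt 2 0 0) 1) (hx : pt 1 0 0 ∈ C₂)
    (hsc : SimplyConnectedSpace ↥(C₂ᶜ)) :
    SimplyConnectedSpace ↥({p : R3 | p 0 > -1} \ (C₂ ∪ segA)) := by
  have := sc_BB C₂ hB hx hsc
  exact (hequiv C₂ hB hx).simplyConnectedSpace
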